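/- Let M be a Malcev algebra over F lying in the variety H, containing L = sl2(F), and such that mL ≠ 0 for every nonzero m ∈ M. Then for all u, v ∈ V there exists an element ⟨u,v⟩ of the commutative associative subalgebra U ⊆ Γ(M) (with N_M = L·U) such that u(1)v(1) = F⟨u,v⟩, u(1)v(2) = u(2)v(1) = (1/2)H⟨u,v⟩, and u(2)v(2) = E⟨u,v⟩; in particular V_2(u)·V_2(v) ⊆ L⟨u,v⟩ where V_2(w) = span{w(1), w(2)}. Moreover the map (u,v) ↦ ⟨u,v⟩ is F-bilinear and skew-symmetric (⟨u,v⟩ = −⟨v,u⟩), and V_2(v)·V_2(v) = 0 for every v ∈ V. -/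

import Mathlib

section
variable {K : Type*} [Field K] {M : Type*} [AddCommGroup M] [Module K M]

/-- the Jacobian `J(x,y,z) = (xy)z + (yz)x + (zx)y` -/
def mjac (μ : M →ₗ[K] M →ₗ[K] M) (x y z : M) : M :=
  μ (μ x y) z + μ (μ y z) x + μ (μ z x) y

/-- `{x,y,z} = (xy)z − (xz)y + 2·x(yz)` -/
def mbr (μ : M →ₗ[K] M →ₗ[K] M) (x y z : M) : M :=
  μ (μ x y) z - μ (μ x z) y + (2 : K) • μ x (μ y z)

/-- `h(y,z,t,x,u) = {yz,t,u}x + {yz,t,x}u + {yx,z,u}t + {yu,z,x}t` -/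
def mh (μ : M →ₗ[K] M →ₗ[K] M) (y z t x u : M) : M :=
  μ (mbr μ (μ y z) t u) x + μ (mbr μ (μ y z) t x) u +
    μ (mbr μ (μ y x) z u) t + μ (mbr μ (μ y u) z x) t

/-- A Malcev algebra structure: anticommutative (`x·x = 0`) together with the Malcev
identity `(xz)(yt) = ((xy)z)t + ((yz)t)x + ((zt)x)y + ((tx)y)z`. -/
def IsMalcev (μ : M →ₗ[K] M →ₗ[K] M) : Prop :=
  (∀ x, μ x x = 0) ∧
    ∀ x y z t, μ (μ x z) (μ y t) =
      μ (μ (μ x y) z) t + μ (μ (μ y z) t) x + μ (μ (μ z t) x) y + μ (μ (μ t x) y) z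

/-- the variety 𝓗 : `h(y,z,t,x,u) = 0` identically -/
def InVarietyH (μ : M →ₗ[K] M →ₗ[K] M) : Prop := ∀ y z t x u, mh μ y z t x u = 0

/-- `N_M = {m | J(m,a,b) = 0 ∀ a,b ∈ L}` -/
def NMset (μ : M →ₗ[K] M →ₗ[K] M) (L : Submodule K M) : Set M :=
  {m : M | ∀ a ∈ L, ∀ b ∈ L, mjac μ m a b = 0}

/-- `J_M = {m | {m,a,b} = 0 ∀ a,b ∈ L}` -/
def JMset (μ : M →ₗ[K] M →ₗ[K] M) (L : Submodule K M) : Set M :=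
  {m : M | ∀ a ∈ L, ∀ b ∈ L, mbr μ m a b = 0}

/-- the centroid Γ(M): linear operators commuting with all multiplications -/
def centroid (μ : M →ₗ[K] M →ₗ[K] M) : Set (Module.End K M) :=
  {α | ∀ x y : M, α (μ x y) = μ x (α y) ∧ α (μ x y) = μ (α x) y}

/-- `p(x,y,z,t) = −{zt,x,y} − {yt,z,x} + {xt,y,z}` -/
def pfun (μ : M →ₗ[K] M →ₗ[K] M) (x y z t : M) : M :=
  -(mbr μ (μ z t) x y) - mbr μ (μ y t) z x + mbr μ (μ x t) y z

/-- `U`: the span of the operators `α(y,a,b) : x ↦ p(x,y,a,b)` with `y ∈ M`, `a,b ∈ L` -/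
def Uspan (μ : M →ₗ[K] M →ₗ[K] M) (L : Submodule K M) : Submodule K (Module.End K M) :=
  Submodule.span K {φ : Module.End K M | ∃ y : M, ∃ a ∈ L, ∃ b ∈ L, ∀ x, φ x = pfun μ x y a b}

/-- `N_M = L·U`: the span of the elements `aα`, `a ∈ L`, `α ∈ U` -/
def NMspan (μ : M →ₗ[K] M →ₗ[K] M) (L : Submodule K M) : Submodule K M :=
  Submodule.span K {m : M | ∃ a ∈ L, ∃ φ ∈ Uspan μ L, m = φ a}

/-- the linear operator `m ↦ J(m,a,b)` -/
def jop (μ : M →ₗ[K] M →ₗ[K] M) (a b : M) : M →ₗ[K] M :=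
  μ.flip b ∘ₗ μ.flip a + μ (μ a b) + μ.flip a ∘ₗ μ b

/-- the linear operator `m ↦ {m,a,b}` -/
def bop (μ : M →ₗ[K] M →ₗ[K] M) (a b : M) : M →ₗ[K] M :=
  μ.flip b ∘ₗ μ.flip a - μ.flip a ∘ₗ μ.flip b + (2 : K) • μ.flip (μ a b)

/-- `N_M` as a submodule (intersection of the kernels of `m ↦ J(m,a,b)`, `a,b ∈ L`) -/
def NMker (μ : M →ₗ[K] M →ₗ[K] M) (L : Submodule K M) : Submodule K M :=
  ⨅ (a : M) (_ : a ∈ L) (b : M) (_ : b ∈ L), LinearMap.ker (jop μ a b)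

/-- `J_M` as a submodule (intersection of the kernels of `m ↦ {m,a,b}`, `a,b ∈ L`) -/
def JMker (μ : M →ₗ[K] M →ₗ[K] M) (L : Submodule K M) : Submodule K M :=
  ⨅ (a : M) (_ : a ∈ L) (b : M) (_ : b ∈ L), LinearMap.ker (bop μ a b)

/-- `Ann_M L` as a set -/
def AnnSet (μ : M →ₗ[K] M →ₗ[K] M) (L : Submodule K M) : Set M :=
  {m : M | ∀ a ∈ L, μ m a = 0}

/-- `Ann_M L` as a submodule -/
def Annker (μ : M →ₗ[K] M →ₗ[K] M) (L : Submodule K M) : Submodule K M :=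
  ⨅ (a : M) (_ : a ∈ L), LinearMap.ker (μ.flip a)

/-- `V = {w ∈ J_M : wH = w, wF = 0}` as a set -/
def Vset (μ : M →ₗ[K] M →ₗ[K] M) (L : Submodule K M) (Hm Fm : M) : Set M :=
  {w : M | w ∈ JMset μ L ∧ μ w Hm = w ∧ μ w Fm = 0}

/-- `V = {w ∈ J_M : wH = w, wF = 0}` as a submodule -/
def Vsub (μ : M →ₗ[K] M →ₗ[K] M) (L : Submodule K M) (Hm Fm : M) : Submodule K M :=
  JMker μ L ⊓ LinearMap.ker (μ.flip Hm - LinearMap.id) ⊓ LinearMap.ker (μ.flip Fm)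

/-- The bilinear map sending `y` to the operator `x ↦ p(x,y,a,b)`. -/
def pOperator (μ : M →ₗ[K] M →ₗ[K] M) (a b : M) : M →ₗ[K] M →ₗ[K] M :=
  LinearMap.mk₂ K (fun y x => pfun μ x y a b)
    (fun y y' x => by
      simp only [pfun, mbr, map_add, LinearMap.add_apply, smul_add]; abel)
    (fun c y x => by
      simp only [pfun, mbr, map_smul, LinearMap.smul_apply]; module)
    (fun y x x' => by
      simp only [pfun, mbr, map_add, LinearMap.add_apply, smul_add]; abel)
    (fun c y x => by
      simp only [pfun, mbr, map_smul, LinearMap.smul_apply]; module)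

@[simp]
lemma pOperator_apply (μ : M →ₗ[K] M →ₗ[K] M) (a b y x : M) :
    pOperator μ a b y x = pfun μ x y a b := rfl

namespace IsMalcev

variable {μ : M →ₗ[K] M →ₗ[K] M}

lemma anticomm (h : IsMalcev μ) (x y : M) : μ x y = -μ y x := by
  have hxy := h.1 (x + y)
  simp only [map_add, LinearMap.add_apply, h.1, zero_add, add_zero] at hxy
  exact eq_neg_of_add_eq_zero_right hxy

/-- The Malcev identity at `(u,v,a,b)`, with `a` and `b` acting from the right. -/
lemma mul_right_mul_right (h : IsMalcev μ) (u v a b : M) :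
    μ (μ u a) (μ v b) = μ (μ (μ u v) a) b - μ u (μ (μ v a) b) - μ (μ u (μ a b)) v
      - μ (μ (μ u b) v) a := by
  rw [h.2 u v a b, h.anticomm (μ (μ v a) b) u, h.anticomm (μ a b) u, h.anticomm b u]
  simp only [map_neg, LinearMap.neg_apply]
  abel

/-- The Malcev identity at `(u,a,v,b)`, with `a` and `b` acting from the right. -/
lemma mul_mul_mul (h : IsMalcev μ) (u v a b : M) :
    μ (μ u v) (μ a b) = μ (μ (μ u a) v) b + μ u (μ (μ v a) b) - μ (μ u (μ v b)) a
      - μ (μ (μ u b) a) v := by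
  rw [h.2 u a v b, h.anticomm a v, h.anticomm (μ v b) u, h.anticomm b u]
  simp only [map_neg, LinearMap.neg_apply]
  rw [h.anticomm (μ (μ v a) b) u]
  abel

/-- The Malcev identity at `(u,a,b,v)`, with `a` and `b` acting from the right. -/
lemma mul_right_mul_right' (h : IsMalcev μ) (u v a b : M) :
    -μ (μ u b) (μ v a) = μ (μ (μ u a) b) v + μ u (μ v (μ a b)) + μ (μ u (μ v b)) a
      - μ (μ (μ u v) a) b := by
  have hm := h.2 u a b v
  rw [h.anticomm a v, h.anticomm (μ a b) v, h.anticomm b v, h.anticomm v u] at hm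
  simp only [map_neg, LinearMap.neg_apply] at hm
  rw [hm, h.anticomm (μ v (μ a b)) u, h.anticomm (μ v b) u]
  simp only [map_neg, LinearMap.neg_apply]
  abel

/-- For `u ∈ V`, the vector `uE` is killed by `E`. -/
lemma mul_raise_raise (h3 : (3 : K) ≠ 0) (h : IsMalcev μ) {E H u : M}
    (hEH : μ E H = E) (huH : μ u H = u) (hu2H : μ (μ u E) H = -μ u E) :
    μ (μ u E) E = 0 := by
  have h₁ := h.2 u E E H
  have h₂ := h.2 u E H E
  have hHE : μ H E = -E := by rw [h.anticomm, hEH]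
  have hEu : μ E u = -μ u E := h.anticomm _ _
  have hHu : μ H u = -u := by rw [h.anticomm, huH]
  simp only [h.1, hEH, hHE, hEu, hHu, huH, hu2H, map_neg, map_zero, LinearMap.neg_apply,
    LinearMap.zero_apply] at h₁ h₂
  have h₃ : (3 : K) • μ (μ u E) E = 0 := by
    linear_combination (norm := module) h₁ + h₂
  exact (smul_eq_zero.mp h₃).resolve_left h3

/-- The multiplication table between two copies of the two-dimensional non-Lie module, and
the action of `sl₂` on the products. -/
lemma module_products (h2 : (2 : K) ≠ 0) (h3 : (3 : K) ≠ 0) (h : IsMalcev μ) {E H F : M}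
    (hEH : μ E H = E) (hFH : μ F H = -F) (hEF : μ E F = (2⁻¹ : K) • H)
    {u u₂ v v₂ : M} (huE : μ u E = u₂) (huH : μ u H = u) (huF : μ u F = 0)
    (huE₂ : μ u₂ E = 0) (huH₂ : μ u₂ H = -u₂) (huF₂ : μ u₂ F = -u)
    (hvE : μ v E = v₂) (hvH : μ v H = v) (hvF : μ v F = 0)
    (hvE₂ : μ v₂ E = 0) (hvH₂ : μ v₂ H = -v₂) (hvF₂ : μ v₂ F = -v) :
    (μ u₂ v = μ u v₂ ∧ μ (μ u v) E = -μ u v₂ ∧ μ (μ u v) H = -μ u v ∧ μ (μ u v) F = 0) ∧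
    μ (μ u v₂) E = -((2⁻¹ : K) • μ u₂ v₂) ∧ μ (μ u v₂) H = 0 ∧
      μ (μ u v₂) F = (2⁻¹ : K) • μ u v := by
  have hHE : μ H E = -E := by rw [h.anticomm, hEH]
  have hFE : μ F E = -((2⁻¹ : K) • H) := by rw [h.anticomm, hEF]
  have m22FF := h.mul_mul_mul u v₂ F F
  have m21FH := h.mul_mul_mul u₂ v F H
  have m11HE := h.mul_mul_mul u v H E
  have m12HH := h.mul_mul_mul u v₂ H H
  have m21FE := h.mul_mul_mul u₂ v F E
  have m11FE := h.mul_mul_mul u v F E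
  have m11EH := h.mul_mul_mul u v E H
  have m12EH := h.mul_mul_mul u v₂ E H
  have m22FE := h.mul_mul_mul u₂ v₂ F E
  have a21FE := h.mul_right_mul_right u₂ v F E
  have b21FE := h.mul_right_mul_right' u₂ v F E
  simp only [h.1, hEH, hHE, hFH, hFE, huE, huH, huF, huE₂, huH₂, huF₂, hvE, hvH, hvF,
    hvE₂, hvH₂, hvF₂, map_neg, map_zero, map_smul, LinearMap.neg_apply, LinearMap.zero_apply,
    LinearMap.smul_apply, neg_neg, neg_zero]
    at m22FF m21FH m11HE m12HH m21FE m11FE m11EH m12EH m22FE a21FE b21FE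
  have h₁₁F : μ (μ u v) F = 0 := by
    linear_combination (norm := (match_scalars <;> (try field_simp) <;> ring1))
      (-1 : K) • m22FF
  have h₁₁H : μ (μ u v) H = -μ u v := by
    linear_combination (norm := (match_scalars <;> (try field_simp) <;> ring1))
      (1 : K) • m21FH
  have h₁₁E : μ (μ u v) E = -μ u v₂ := by
    linear_combination (norm := (match_scalars <;> (try field_simp) <;> ring1))
      (-2⁻¹ : K) • m11HE + (-(2⁻¹ * 2⁻¹) : K) • m12HH + (-3⁻¹ : K) • a21FE
        + (-3⁻¹ : K) • b21FE + (-3⁻¹ : K) • m21FE + (3⁻¹ * 2⁻¹ : K) • m11EH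
  have h₂₁ : μ u₂ v = μ u v₂ := by
    linear_combination (norm := (match_scalars <;> (try field_simp) <;> ring1))
      (2 * 3⁻¹ : K) • a21FE + (2 * 3⁻¹ : K) • b21FE + (2 * 3⁻¹ : K) • m21FE
        + (-3⁻¹ : K) • m11EH
  have h₁₂E : μ (μ u v₂) E = -((2⁻¹ : K) • μ u₂ v₂) := by
    linear_combination (norm := (match_scalars <;> (try field_simp) <;> ring1))
      (-2⁻¹ : K) • m12EH + (1 : K) • m22FE
  have h₁₂H : μ (μ u v₂) H = 0 := by
    linear_combination (norm := (match_scalars <;> (try field_simp) <;> ring1))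
      (-2⁻¹ : K) • m12HH
  have h₁₂F : μ (μ u v₂) F = (2⁻¹ : K) • μ u v := by
    linear_combination (norm := (match_scalars <;> (try field_simp) <;> ring1))
      (1 : K) • m11FE + (2⁻¹ : K) • m21FH
  exact ⟨⟨h₂₁, h₁₁E, h₁₁H, h₁₁F⟩, h₁₂E, h₁₂H, h₁₂F⟩

/-- The action of `sl₂` on a vector of `V` and on its image under `E`. -/
lemma mem_Vset_action (h3 : (3 : K) ≠ 0) (h : IsMalcev μ) {E H F : M} (hEH : μ E H = E)
    (hEF : μ E F = (2⁻¹ : K) • H) (h2 : (2 : K) ≠ 0) {L : Submodule K M} (hE : E ∈ L)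
    (hH : H ∈ L) (hF : F ∈ L) {u : M} (hu : u ∈ Vset μ L H F) :
    μ (μ u E) E = 0 ∧ μ (μ u E) H = -μ u E ∧ μ (μ u E) F = -u := by
  obtain ⟨hJ, huH, huF⟩ := hu
  have hEHu := hJ E hE H hH
  have hEFu := hJ E hE F hF
  simp only [mbr, hEH, hEF, huH, huF, map_smul, map_zero, LinearMap.zero_apply, sub_zero,
    smul_smul, mul_inv_cancel₀ h2, one_smul] at hEHu hEFu
  have hu2H : μ (μ u E) H = -μ u E := by
    linear_combination (norm := module) hEHu
  exact ⟨h.mul_raise_raise h3 hEH huH hu2H, hu2H, eq_neg_of_add_eq_zero_left hEFu⟩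

/-- If `y` generates a copy of the adjoint module of `sl₂` with `y` in the place of `F`, then
`-3⁻¹ p(·,y,E,H)` maps `sl₂` onto that copy. -/
lemma pfun_adjoint (h2 : (2 : K) ≠ 0) (h : IsMalcev μ) {E H F : M}
    (hEH : μ E H = E) (hFH : μ F H = -F) (hEF : μ E F = (2⁻¹ : K) • H) {y z w : M}
    (hyE : μ y E = -z) (hyH : μ y H = -y) (hyF : μ y F = 0)
    (hzE : μ z E = -((2⁻¹ : K) • w)) (hzH : μ z H = 0) (hzF : μ z F = (2⁻¹ : K) • y) :
    pfun μ F y E H = (-3 : K) • y ∧ pfun μ H y E H = (-6 : K) • z ∧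
      pfun μ E y E H = (-3 : K) • w := by
  have hFE : μ F E = -((2⁻¹ : K) • H) := by rw [h.anticomm, hEF]
  refine ⟨?_, ?_, ?_⟩ <;>
  · simp only [pfun, mbr, h.1, hEH, hFH, hEF, hFE, hyE, hyH, hyF, hzE, hzH, hzF,
      h.anticomm E y, h.anticomm H y, h.anticomm F y, h.anticomm E z, h.anticomm F z,
      map_neg, map_zero, map_smul, LinearMap.neg_apply, LinearMap.zero_apply, LinearMap.smul_apply]
    match_scalars <;> field_simp <;> ring1

end IsMalcev

/-- The products of the 2-dimensional modules `V₂(u)` and `V₂(v)`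
are coordinatized by a skew-symmetric bilinear map `⟨·,·⟩ : V × V → U`:
`u(1)v(1) = F⟨u,v⟩`, `u(1)v(2) = u(2)v(1) = ½H⟨u,v⟩`, `u(2)v(2) = E⟨u,v⟩`;
in particular `V₂(u)·V₂(v) ⊆ L⟨u,v⟩` and `V₂(v)² = 0`. -/
theorem stmt7
    (h2 : (2 : K) ≠ 0) (h3 : (3 : K) ≠ 0)
    (μ : M →ₗ[K] M →ₗ[K] M) (hMal : IsMalcev μ) (hVarH : InVarietyH μ)
    (E H F : M) (hind : LinearIndependent K ![E, H, F])
    (hEH : μ E H = E) (hFH : μ F H = -F) (hEF : μ E F = (2⁻¹ : K) • H)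
    (L : Submodule K M) (hL : L = Submodule.span K {E, H, F})
    (hfaith : ∀ m : M, m ≠ 0 → ∃ a ∈ L, μ m a ≠ 0) :
    ∃ bk : M → M → Module.End K M,
      (∀ u ∈ Vset μ L H F, ∀ v ∈ Vset μ L H F,
        bk u v ∈ Uspan μ L ∧
        μ u v = bk u v F ∧
        μ u (μ v E) = (2⁻¹ : K) • (bk u v H) ∧
        μ (μ u E) v = (2⁻¹ : K) • (bk u v H) ∧
        μ (μ u E) (μ v E) = bk u v E) ∧
      (∀ u ∈ Vset μ L H F, ∀ v ∈ Vset μ L H F, bk u v = -(bk v u)) ∧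
      (∀ u ∈ Vset μ L H F, ∀ u' ∈ Vset μ L H F, ∀ v ∈ Vset μ L H F,
        bk (u + u') v = bk u v + bk u' v) ∧
      (∀ (c : K), ∀ u ∈ Vset μ L H F, ∀ v ∈ Vset μ L H F, bk (c • u) v = c • bk u v) ∧
      (∀ u ∈ Vset μ L H F, ∀ v ∈ Vset μ L H F,
        ∀ x ∈ Submodule.span K {u, μ u E}, ∀ y ∈ Submodule.span K {v, μ v E},
          ∃ a ∈ L, μ x y = bk u v a) ∧
      (∀ v ∈ Vset μ L H F,
        ∀ x ∈ Submodule.span K {v, μ v E}, ∀ y ∈ Submodule.span K {v, μ v E}, μ x y = 0) := by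
  subst hL
  have hE : E ∈ Submodule.span K {E, H, F} := Submodule.subset_span (by simp)
  have hH : H ∈ Submodule.span K {E, H, F} := Submodule.subset_span (by simp)
  have hF : F ∈ Submodule.span K {E, H, F} := Submodule.subset_span (by simp)
  set L := Submodule.span K {E, H, F}
  set bk : M → M → Module.End K M := fun u v => pOperator μ E H ((-3⁻¹ : K) • μ u v) with hbk
  have hprod : ∀ u ∈ Vset μ L H F, ∀ v ∈ Vset μ L H F,
      μ u v = bk u v F ∧ μ u (μ v E) = (2⁻¹ : K) • bk u v H ∧
      μ (μ u E) v = (2⁻¹ : K) • bk u v H ∧ μ (μ u E) (μ v E) = bk u v E := by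
    intro u hu v hv
    obtain ⟨huE₂, huH₂, huF₂⟩ := hMal.mem_Vset_action h3 hEH hEF h2 hE hH hF hu
    obtain ⟨hvE₂, hvH₂, hvF₂⟩ := hMal.mem_Vset_action h3 hEH hEF h2 hE hH hF hv
    obtain ⟨⟨h₂₁, hyE, hyH, hyF⟩, hzE, hzH, hzF⟩ :=
      hMal.module_products h2 h3 hEH hFH hEF rfl hu.2.1 hu.2.2 huE₂ huH₂ huF₂
        rfl hv.2.1 hv.2.2 hvE₂ hvH₂ hvF₂
    obtain ⟨hpF, hpH, hpE⟩ :=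
      hMal.pfun_adjoint h2 hEH hFH hEF hyE hyH hyF hzE hzH hzF
    simp only [hbk, h₂₁, map_smul, LinearMap.smul_apply, pOperator_apply, hpF, hpH, hpE,
      smul_smul]
    refine ⟨?_, ?_, ?_, ?_⟩ <;> match_scalars <;> field_simp <;> ring1
  have hself : ∀ v, bk v v = 0 := fun v => by simp [hbk, hMal.1]
  have hspan : ∀ u ∈ Vset μ L H F, ∀ v ∈ Vset μ L H F,
      ∀ x ∈ Submodule.span K {u, μ u E}, ∀ y ∈ Submodule.span K {v, μ v E},
        ∃ a ∈ L, μ x y = bk u v a := by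
    intro u hu v hv x hx y hy
    obtain ⟨h₁₁, h₁₂, h₂₁, h₂₂⟩ := hprod u hu v hv
    obtain ⟨a, b, rfl⟩ := Submodule.mem_span_pair.mp hx
    obtain ⟨c, d, rfl⟩ := Submodule.mem_span_pair.mp hy
    refine ⟨(a * c) • F + ((a * d + b * c) * 2⁻¹) • H + (b * d) • E,
      add_mem (add_mem (L.smul_mem _ hF) (L.smul_mem _ hH)) (L.smul_mem _ hE), ?_⟩
    simp only [map_add, map_smul, LinearMap.add_apply, LinearMap.smul_apply, h₁₁, h₁₂, h₂₁, h₂₂]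
    module
  refine ⟨bk, fun u hu v hv => ⟨Submodule.subset_span ⟨_, E, hE, H, hH, fun _ => rfl⟩,
    hprod u hu v hv⟩, ?_, ?_, ?_, hspan, ?_⟩
  · intro u _ v _
    simp only [hbk]
    rw [hMal.anticomm u v, smul_neg, map_neg]
  · intro u _ u' _ v _
    simp only [hbk, map_add, LinearMap.add_apply, smul_add]
  · intro c u _ v _
    simp only [hbk, map_smul, LinearMap.smul_apply]
    rw [smul_comm]
  · intro v hv x hx y hy
    obtain ⟨a, -, ha⟩ := hspan v hv v hv x hx y hy
    rw [ha, hself, LinearMap.zero_apply]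

end
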